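/- Let f(z, z̄) and g(z, z̄) be complex polynomials in z and z̄ with no common zeros, with deg f ≥ deg g. Let d = deg f and let T(z, z̄) be the homogeneous component of f of degree d. Assume |T(z, z̄)| → ∞ as |z| → ∞. Let R : ℂ̄ → ℂ̄ be the continuous map defined by R(z) = f(z,z̄)/g(z,z̄) when g(z,z̄) ≠ 0, R(z) = ∞ when g(z,z̄) = 0, and R(∞) = lim_{|z|→∞} f/g. Then the degree of R equals the winding number about 0 of the loop α ↦ T(e^{iα}, e^{-iα}), α ∈ [0, 2π]. -/

import Mathlib

open Complex Topology unitInterval Filter OnePoint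
open scoped OnePoint

/-- The standard map of degree `n` on the Riemann sphere `ℂ̄ = ℂ ∪ {∞}`
(identified with `S²` via stereographic projection): for `n > 0` it is `z ↦ zⁿ`,
for `n = 0` the constant map `1`, and for `n < 0` it is `z ↦ (conj z)^(-n)`,
each sending `∞ ↦ ∞` (for `n ≠ 0`). -/
noncomputable def stdSphereMap (n : ℤ) : OnePoint ℂ → OnePoint ℂ := fun z =>
  OnePoint.rec (if n = 0 then ((1 : ℂ) : OnePoint ℂ) else (∞ : OnePoint ℂ))
    (fun w =>
      if n = 0 then ((1 : ℂ) : OnePoint ℂ)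
      else if 0 < n then ((w ^ n.toNat : ℂ) : OnePoint ℂ)
      else (((starRingEnd ℂ) w ^ (-n).toNat : ℂ) : OnePoint ℂ)) z

/-- `R : ℂ̄ → ℂ̄` has topological degree `n`: by Hopf's theorem this holds iff `R` is
(freely) homotopic to the standard degree-`n` map; the degree is the integer corresponding
to the homotopy class of `R` under `π₂(S²) ≅ ℤ`, the identity map having degree `1`. -/
def HasDegree (R : OnePoint ℂ → OnePoint ℂ) (n : ℤ) : Prop :=
  ∃ H : OnePoint ℂ × I → OnePoint ℂ, Continuous H ∧
    (∀ z, H (z, 0) = R z) ∧ (∀ z, H (z, 1) = stdSphereMap n z)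

/-- Evaluation of a polynomial `f(z, z̄)` in `z` and `z̄` at the point `z ∈ ℂ`
(the first variable gets `z`, the second gets `z̄`). -/
noncomputable def evalZZbar (f : MvPolynomial (Fin 2) ℂ) (z : ℂ) : ℂ :=
  MvPolynomial.eval ![z, (starRingEnd ℂ) z] f

/-- The continuous loop `γ : [0, 2π] → ℂ \ {0}` has winding number `n` about `0`:
there is a continuous choice of argument `θ` along the loop whose total increment
is `2πn` (counterclockwise loops get positive winding numbers). -/
def IsWindingNumber (γ : ℝ → ℂ) (n : ℤ) : Prop :=
  ∃ θ : ℝ → ℝ, ContinuousOn θ (Set.Icc 0 (2 * Real.pi)) ∧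
    (∀ t ∈ Set.Icc 0 (2 * Real.pi),
      γ t = (‖γ t‖ : ℂ) * Complex.exp ((θ t : ℂ) * Complex.I)) ∧
    θ (2 * Real.pi) - θ 0 = 2 * Real.pi * (n : ℝ)

/-!
Lift `R` to the map `(f, g) : ℂ → ℂ² ∖ 0`. Since `ℂ²` has real dimension `4 > 2 + 1`, the straight
line homotopy from `(f, g)` to `(T, 1)`, bent by a generic vector, avoids `0`. At infinity it is
dominated by its first coordinate, because `f ∼ T` and `g = O(T)`. So `R = [f : g]` is homotopic to
`[T : 1] = T`. As `T` is homogeneous, radial rescaling and a lift of its argument on the unit circle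
deform it to the standard map whose degree is the winding number.

The standard maps are pairwise non-homotopic because the pullbacks of the tautological line bundle
have different clutching functions `u ↦ u ^ n`. The clutching number is invariant under homotopy:
orthogonal projection between lines of `ℂ²` carries frames to frames as long as no point is
moved to its antipode.
-/

/-! ### Functions tending to infinity -/

lemma tendsto_cocompact_iff_tendsto_norm_atTop {Y E : Type*} [NormedAddCommGroup E]
    [ProperSpace E] {l : Filter Y} {w : Y → E} :
    Tendsto w l (cocompact E) ↔ Tendsto (fun y => ‖w y‖) l atTop := by
  rw [← Metric.cobounded_eq_cocompact, tendsto_norm_atTop_iff_cobounded]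

lemma tendsto_cocompact_of_norm_eq_pow {Y E F : Type*} [NormedAddCommGroup E] [ProperSpace E]
    [NormedAddCommGroup F] [ProperSpace F] {l : Filter Y} {v : Y → E} {w : Y → F} {m : ℕ}
    (hm : m ≠ 0) (hv : Tendsto v l (cocompact E)) (hw : ∀ y, ‖w y‖ = ‖v y‖ ^ m) :
    Tendsto w l (cocompact F) := by
  rw [tendsto_cocompact_iff_tendsto_norm_atTop] at *
  simp only [hw]
  exact (tendsto_pow_atTop hm).comp hv

lemma tendsto_inv_of_tendsto_cocompact {Y : Type*} {l : Filter Y} {w : Y → ℂ}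
    (hw : Tendsto w l (cocompact ℂ)) : Tendsto (fun y => (w y)⁻¹) l (𝓝 0) := by
  rw [← Metric.cobounded_eq_cocompact] at hw
  exact tendsto_inv₀_cobounded.comp hw

lemma eventually_ne_of_tendsto_cocompact {Y E : Type*} [TopologicalSpace E] {l : Filter Y}
    {w : Y → E} (hw : Tendsto w l (cocompact E)) (a : E) : ∀ᶠ y in l, w y ≠ a :=
  hw.eventually isCompact_singleton.compl_mem_cocompact

/-! ### Homogeneous coordinates on the Riemann sphere -/

/-- The point `[v.1 : v.2]` of the Riemann sphere with homogeneous coordinates `v`, that is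
`v.1 / v.2`; the vector `0` is sent to `∞`. -/
noncomputable def ofCoords (v : ℂ × ℂ) : OnePoint ℂ :=
  if v.2 = 0 then ∞ else ((v.1 / v.2 : ℂ) : OnePoint ℂ)

/-- Homogeneous coordinates of a point of the Riemann sphere: `(1, 0)` for `∞` and `(z, 1)`
for `z : ℂ`. -/
noncomputable def coords (x : OnePoint ℂ) : ℂ × ℂ := x.elim (1, 0) fun z => (z, 1)

lemma coords_ne_zero (x : OnePoint ℂ) : coords x ≠ 0 := by
  cases x <;> simp [coords]

lemma ofCoords_of_snd_eq_zero {v : ℂ × ℂ} (h : v.2 = 0) : ofCoords v = ∞ := if_pos h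

lemma ofCoords_of_snd_ne_zero {v : ℂ × ℂ} (h : v.2 ≠ 0) :
    ofCoords v = ((v.1 / v.2 : ℂ) : OnePoint ℂ) := if_neg h

lemma ofCoords_mk_one (z : ℂ) : ofCoords (z, 1) = z := by simp [ofCoords]

lemma ofCoords_coords (x : OnePoint ℂ) : ofCoords (coords x) = x := by
  cases x <;> simp [ofCoords, coords]

lemma ofCoords_smul {c : ℂ} (hc : c ≠ 0) (v : ℂ × ℂ) : ofCoords (c • v) = ofCoords v := by
  simp [ofCoords, hc, mul_div_mul_left]

lemma exists_eq_smul_of_ofCoords_eq {u v : ℂ × ℂ} (hu : u ≠ 0) (hv : v ≠ 0)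
    (h : ofCoords u = ofCoords v) : ∃ c : ℂ, c ≠ 0 ∧ u = c • v := by
  obtain ⟨a, b⟩ := u
  obtain ⟨a', b'⟩ := v
  by_cases hb : b = 0 <;> by_cases hb' : b' = 0
  · subst hb hb'
    have ha : a ≠ 0 := fun h => hu (by simp [h])
    have ha' : a' ≠ 0 := fun h => hv (by simp [h])
    exact ⟨a / a', div_ne_zero ha ha', by simp [ha']⟩
  · simp [ofCoords, hb, hb'] at h
  · simp [ofCoords, hb, hb'] at h
  · simp only [ofCoords, hb, hb', if_false, OnePoint.coe_eq_coe] at h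
    refine ⟨b / b', div_ne_zero hb hb', Prod.ext ?_ (by simp [hb'])⟩
    rw [div_eq_iff hb] at h
    simp only [h, Prod.smul_mk, smul_eq_mul]
    ring

lemma continuousAt_ofCoords {v : ℂ × ℂ} (hv : v ≠ 0) : ContinuousAt ofCoords v := by
  by_cases hb : v.2 = 0
  · have ha : v.1 ≠ 0 := fun ha => hv (Prod.ext ha hb)
    rw [ContinuousAt, ofCoords_of_snd_eq_zero hb]
    refine Tendsto.if tendsto_const_nhds (OnePoint.tendsto_coe_infty.comp ?_)
    rw [coclosedCompact_eq_cocompact, tendsto_cocompact_iff_tendsto_norm_atTop]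
    simp only [div_eq_mul_inv, norm_mul, norm_inv]
    have hnum : Tendsto (fun u : ℂ × ℂ => ‖u.1‖) (𝓝 v ⊓ 𝓟 {u | u.2 ≠ 0}) (𝓝 ‖v.1‖) :=
      (continuous_fst.norm.tendsto v).mono_left inf_le_left
    have hden : Tendsto (fun u : ℂ × ℂ => ‖u.2‖) (𝓝 v ⊓ 𝓟 {u | u.2 ≠ 0}) (𝓝[>] 0) :=
      tendsto_nhdsWithin_iff.2
        ⟨by simpa [hb] using (continuous_snd.norm.tendsto v).mono_left inf_le_left,
          eventually_inf_principal.2 (Eventually.of_forall fun u hu => norm_pos_iff.2 hu)⟩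
    exact hnum.pos_mul_atTop (norm_pos_iff.2 ha) (tendsto_inv_nhdsGT_zero.comp hden)
  · have h : ContinuousAt (fun u : ℂ × ℂ => ((u.1 / u.2 : ℂ) : OnePoint ℂ)) v :=
      OnePoint.continuous_coe.continuousAt.comp (continuousAt_fst.div continuousAt_snd hb)
    refine h.congr ?_
    filter_upwards [continuousAt_snd.eventually_ne hb] with u hu
    rw [ofCoords_of_snd_ne_zero hu]

lemma nhds_ofCoords {v : ℂ × ℂ} (hv : v ≠ 0) : 𝓝 (ofCoords v) = map ofCoords (𝓝 v) := by
  refine le_antisymm ?_ (continuousAt_ofCoords hv)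
  by_cases hb : v.2 = 0
  · have ha : v.1 ≠ 0 := fun ha => hv (Prod.ext ha hb)
    have hlift : Tendsto (fun z : ℂ => (v.1, v.1 * z⁻¹)) (cocompact ℂ) (𝓝 v) := by
      have hsnd := (tendsto_inv_of_tendsto_cocompact tendsto_id).const_mul v.1
      rw [mul_zero, ← hb] at hsnd
      exact (tendsto_const_nhds (x := v.1)).prodMk_nhds hsnd
    rw [ofCoords_of_snd_eq_zero hb, OnePoint.nhds_infty_eq, coclosedCompact_eq_cocompact]
    refine sup_le ?_ ?_
    · refine (Filter.map_congr ?_).trans_le (Filter.map_map.symm.trans_le (Filter.map_mono hlift))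
      filter_upwards [isCompact_singleton.compl_mem_cocompact] with z (hz : z ≠ 0)
      simp [ofCoords, ha, hz, div_mul_cancel_left₀]
    · rw [← ofCoords_of_snd_eq_zero hb, ← Filter.map_pure]
      exact Filter.map_mono (pure_le_nhds v)
  · have hlift : Tendsto (fun z : ℂ => (z * v.2, v.2)) (𝓝 (v.1 / v.2)) (𝓝 v) := by
      have h : Continuous fun z : ℂ => (z * v.2, v.2) := by fun_prop
      simpa [hb] using h.tendsto (v.1 / v.2)
    rw [ofCoords_of_snd_ne_zero hb, OnePoint.nhds_coe_eq]
    refine (Filter.map_congr (.of_forall fun z => ?_)).trans_le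
      (Filter.map_map.symm.trans_le (Filter.map_mono hlift))
    simp [ofCoords, hb]

/-! ### Homotopies of the Riemann sphere in homogeneous coordinates -/

lemma continuous_prod_onePoint {X Y Z : Type*} [TopologicalSpace X] [TopologicalSpace Y]
    [TopologicalSpace Z] {F : X × OnePoint Y → Z}
    (hcoe : Continuous fun p : X × Y => F (p.1, p.2)) (hinfty : Continuous fun x => F (x, ∞))
    (hlim : ∀ x, Tendsto (fun p : X × Y => F (p.1, p.2)) (𝓝 x ×ˢ coclosedCompact Y)
      (𝓝 (F (x, ∞)))) :
    Continuous F := by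
  refine continuous_iff_continuousAt.2 fun ⟨x, y⟩ => ?_
  rw [ContinuousAt, nhds_prod_eq]
  cases y with
  | infty =>
    rw [OnePoint.nhds_infty_eq, prod_sup, tendsto_sup, prod_map_right, tendsto_map'_iff,
      prod_pure, tendsto_map'_iff]
    exact ⟨hlim x, hinfty.tendsto x⟩
  | coe y =>
    rw [OnePoint.nhds_coe_eq, prod_map_right, tendsto_map'_iff, ← nhds_prod_eq]
    exact hcoe.tendsto (x, y)

lemma continuous_elim_ofCoords {X : Type*} [TopologicalSpace X] {Φ : X × ℂ → ℂ × ℂ}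
    {v : X → ℂ × ℂ} {N : X × ℂ → ℂ} (hΦ : Continuous Φ) (hΦ₀ : ∀ p, Φ p ≠ 0)
    (hv : Continuous v) (hv₀ : ∀ x, v x ≠ 0)
    (hlim : ∀ x, Tendsto (fun p => (N p)⁻¹ • Φ p) (𝓝 x ×ˢ cocompact ℂ) (𝓝 (v x))) :
    Continuous fun p : X × OnePoint ℂ =>
      p.2.elim (ofCoords (v p.1)) fun z => ofCoords (Φ (p.1, z)) := by
  refine continuous_prod_onePoint ?_ ?_ fun x => ?_
  · exact continuous_iff_continuousAt.2 fun p =>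
      (continuousAt_ofCoords (hΦ₀ p)).comp hΦ.continuousAt
  · exact continuous_iff_continuousAt.2 fun x =>
      (continuousAt_ofCoords (hv₀ x)).comp hv.continuousAt
  · rw [coclosedCompact_eq_cocompact]
    refine ((continuousAt_ofCoords (hv₀ x)).tendsto.comp (hlim x)).congr' ?_
    filter_upwards [(hlim x).eventually_ne (hv₀ x)] with p hp
    exact ofCoords_smul (left_ne_zero_of_smul hp) _

lemma eq_of_eq_on_coe {R S : C(OnePoint ℂ, OnePoint ℂ)} (h : ∀ z : ℂ, R z = S z) : R = S :=
  DFunLike.ext' (OnePoint.denseRange_coe.equalizer R.continuous S.continuous (funext h))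

lemma homotopic_of_ofCoords {R S : C(OnePoint ℂ, OnePoint ℂ)} {Φ : I × ℂ → ℂ × ℂ}
    {v : I → ℂ × ℂ} {N : I × ℂ → ℂ} (hΦ : Continuous Φ) (hΦ₀ : ∀ p, Φ p ≠ 0)
    (hv : Continuous v) (hv₀ : ∀ t, v t ≠ 0)
    (hlim : ∀ t, Tendsto (fun p => (N p)⁻¹ • Φ p) (𝓝 t ×ˢ cocompact ℂ) (𝓝 (v t)))
    (hR : ∀ z : ℂ, R z = ofCoords (Φ (0, z))) (hS : ∀ z : ℂ, S z = ofCoords (Φ (1, z))) :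
    R.Homotopic S := by
  let H : C(I × OnePoint ℂ, OnePoint ℂ) := ⟨_, continuous_elim_ofCoords hΦ hΦ₀ hv hv₀ hlim⟩
  have hH₀ : R = H.comp (.prodMk (.const _ 0) (.id _)) := eq_of_eq_on_coe hR
  have hH₁ : S = H.comp (.prodMk (.const _ 1) (.id _)) := eq_of_eq_on_coe hS
  exact ⟨⟨H, fun x => (DFunLike.congr_fun hH₀ x).symm, fun x => (DFunLike.congr_fun hH₁ x).symm⟩⟩

lemma homotopic_of_segment_add_ne_zero {R S : C(OnePoint ℂ, OnePoint ℂ)} {φ ψ : ℂ → ℂ × ℂ}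
    {a v w : ℂ × ℂ} {N : ℂ → ℂ} (hφ : Continuous φ) (hψ : Continuous ψ)
    (hseg : ∀ (t : I) (z : ℂ),
      (1 - t : ℝ) • φ z + (t : ℝ) • ψ z + (t * (1 - t) : ℝ) • a ≠ 0)
    (hseg_lim : ∀ t : I, (1 - t : ℝ) • v + (t : ℝ) • w ≠ 0)
    (hN : Tendsto N (cocompact ℂ) (cocompact ℂ))
    (hφ_lim : Tendsto (fun z => (N z)⁻¹ • φ z) (cocompact ℂ) (𝓝 v))
    (hψ_lim : Tendsto (fun z => (N z)⁻¹ • ψ z) (cocompact ℂ) (𝓝 w))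
    (hR : ∀ z : ℂ, R z = ofCoords (φ z)) (hS : ∀ z : ℂ, S z = ofCoords (ψ z)) :
    R.Homotopic S := by
  refine homotopic_of_ofCoords
    (Φ := fun p : I × ℂ => (1 - p.1 : ℝ) • φ p.2 + (p.1 : ℝ) • ψ p.2 + (p.1 * (1 - p.1) : ℝ) • a)
    (N := fun p => N p.2) (by fun_prop) (fun p => hseg p.1 p.2) (by fun_prop) hseg_lim
    (fun t => ?_) (by simp [hR]) (by simp [hS])
  have ht : Tendsto (fun p : I × ℂ => (p.1 : ℝ)) (𝓝 t ×ˢ cocompact ℂ) (𝓝 t) :=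
    (continuous_subtype_val.tendsto t).comp tendsto_fst
  have hN_inv : Tendsto (fun p : I × ℂ => (N p.2)⁻¹ • a) (𝓝 t ×ˢ cocompact ℂ) (𝓝 0) := by
    simpa using ((tendsto_inv_of_tendsto_cocompact hN).comp tendsto_snd).smul_const a
  have hlim := (((tendsto_const_nhds (x := (1 : ℝ))).sub ht).smul (hφ_lim.comp tendsto_snd)).add
    (ht.smul (hψ_lim.comp tendsto_snd)) |>.add
    ((ht.mul ((tendsto_const_nhds (x := (1 : ℝ))).sub ht)).smul hN_inv)
  rw [smul_zero, add_zero] at hlim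
  refine hlim.congr fun p => ?_
  simp only [Function.comp_apply, smul_add, smul_comm (N p.2)⁻¹]

lemma homotopic_of_tendsto_cocompact {R S : C(OnePoint ℂ, OnePoint ℂ)} {w : I × ℂ → ℂ}
    (hw : Continuous w) (hlim : ∀ t, Tendsto w (𝓝 t ×ˢ cocompact ℂ) (cocompact ℂ))
    (hR : ∀ z : ℂ, R z = w (0, z)) (hS : ∀ z : ℂ, S z = w (1, z)) : R.Homotopic S := by
  refine homotopic_of_ofCoords (Φ := fun p => (w p, 1)) (v := fun _ => (1, 0)) (N := w)
    (by fun_prop) (by simp) continuous_const (by simp) (fun t => ?_)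
    (by simpa [ofCoords_mk_one] using hR) (by simpa [ofCoords_mk_one] using hS)
  refine ((tendsto_const_nhds (x := (1 : ℂ))).prodMk_nhds
    (tendsto_inv_of_tendsto_cocompact (hlim t))).congr' ?_
  filter_upwards [eventually_ne_of_tendsto_cocompact (hlim t) 0] with p hp
  simp [hp]

lemma homotopic_of_sameRay {R S : C(OnePoint ℂ, OnePoint ℂ)} {w₀ w₁ : ℂ → ℂ}
    (hw₀ : Continuous w₀) (hw₁ : Continuous w₁)
    (hlim₀ : Tendsto w₀ (cocompact ℂ) (cocompact ℂ))
    (hlim₁ : Tendsto w₁ (cocompact ℂ) (cocompact ℂ))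
    (hray : ∀ z, SameRay ℝ (w₀ z) (w₁ z))
    (hR : ∀ z : ℂ, R z = w₀ z) (hS : ∀ z : ℂ, S z = w₁ z) : R.Homotopic S := by
  refine homotopic_of_tendsto_cocompact
    (w := fun p => (1 - p.1 : ℝ) • w₀ p.2 + (p.1 : ℝ) • w₁ p.2) (by fun_prop) (fun t => ?_)
    (by simp [hR]) (by simp [hS])
  rw [tendsto_cocompact_iff_tendsto_norm_atTop] at *
  refine tendsto_atTop.2 fun b => ?_
  filter_upwards [tendsto_snd.eventually (tendsto_atTop.1 hlim₀ b),
    tendsto_snd.eventually (tendsto_atTop.1 hlim₁ b)] with p hb₀ hb₁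
  have ht₀ : (0 : ℝ) ≤ p.1 := p.1.2.1
  have ht₁ : (0 : ℝ) ≤ 1 - p.1 := sub_nonneg.2 p.1.2.2
  calc b = (1 - p.1) * b + p.1 * b := by ring
    _ ≤ (1 - p.1) * ‖w₀ p.2‖ + p.1 * ‖w₁ p.2‖ := by gcongr
    _ = ‖(1 - p.1 : ℝ) • w₀ p.2 + (p.1 : ℝ) • w₁ p.2‖ := by
      rw [(((hray p.2).nonneg_smul_left ht₁).nonneg_smul_right ht₀).norm_add,
        norm_smul_of_nonneg ht₁, norm_smul_of_nonneg ht₀]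

/-! ### General position -/

/-- The family is nonvanishing as soon as `-a` avoids every `t⁻¹ • φ x + (1 - t)⁻¹ • ψ x` with
`0 < t < 1`, and these vectors form a `C¹` image of a space of smaller dimension. -/
lemma exists_forall_segment_add_ne_zero {E F : Type*} [NormedAddCommGroup E] [NormedSpace ℝ E]
    [FiniteDimensional ℝ E] [NormedAddCommGroup F] [NormedSpace ℝ F] [FiniteDimensional ℝ F]
    (hdim : Module.finrank ℝ E + 1 < Module.finrank ℝ F) {φ ψ : E → F}
    (hφ : ContDiff ℝ 1 φ) (hψ : ContDiff ℝ 1 ψ) (hφ₀ : ∀ x, φ x ≠ 0) (hψ₀ : ∀ x, ψ x ≠ 0) :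
    ∃ a : F, ∀ (t : I) (x : E),
      (1 - t : ℝ) • φ x + (t : ℝ) • ψ x + (t * (1 - t) : ℝ) • a ≠ 0 := by
  let s : Set (E × ℝ) := Set.univ ×ˢ Set.Ioo 0 1
  let k : E × ℝ → F := fun p => p.2⁻¹ • φ p.1 + (1 - p.2)⁻¹ • ψ p.1
  have hk : ContDiffOn ℝ 1 k s := fun p ⟨_, hp₀, hp₁⟩ => by
    have ht₀ : p.2 ≠ 0 := hp₀.ne'
    have ht₁ : 1 - p.2 ≠ 0 := (sub_pos.2 hp₁).ne'
    refine ContDiffAt.contDiffWithinAt (.add (.smul ?_ ?_) (.smul ?_ ?_))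
    all_goals fun_prop (disch := assumption)
  have hs : dimH s < Module.finrank ℝ F := calc
    dimH s ≤ dimH (Set.univ : Set (E × ℝ)) := dimH_mono (Set.subset_univ s)
    _ = (Module.finrank ℝ E + 1 : ℕ) := by simp [Real.dimH_univ_eq_finrank]
    _ < Module.finrank ℝ F := by exact_mod_cast hdim
  obtain ⟨b, hb⟩ := (hk.dense_compl_image_of_dimH_lt_finrank
    (convex_univ.prod (convex_Ioo 0 1)) subset_rfl hs).nonempty
  refine ⟨-b, fun t x h => ?_⟩
  rcases eq_or_ne t 0 with rfl | ht₀
  · exact hφ₀ x (by simpa using h)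
  rcases eq_or_ne t 1 with rfl | ht₁
  · exact hψ₀ x (by simpa using h)
  have htpos : (0 : ℝ) < t := unitInterval.pos_iff_ne_zero.2 ht₀
  have htlt : (t : ℝ) < 1 := unitInterval.lt_one_iff_ne_one.2 ht₁
  have ht₀' : (t : ℝ) ≠ 0 := htpos.ne'
  have ht₁' : 1 - (t : ℝ) ≠ 0 := (sub_pos.2 htlt).ne'
  refine hb ⟨(x, t), ⟨Set.mem_univ x, htpos, htlt⟩, ?_⟩
  have hsmul : (t * (1 - t) : ℝ) • (k (x, t) - b) = 0 := by
    rw [← h]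
    simp only [k, smul_add, smul_sub, smul_smul, smul_neg]
    match_scalars <;> field_simp
  exact sub_eq_zero.1 ((smul_eq_zero.1 hsmul).resolve_left (mul_ne_zero ht₀' ht₁'))

/-! ### The standard maps -/

/-- The standard map of degree `n` on the finite plane: `z ^ n` for `0 ≤ n` and
`conj z ^ (-n)` for `n ≤ 0`. -/
noncomputable def stdPow (n : ℤ) (z : ℂ) : ℂ :=
  if 0 ≤ n then z ^ n.natAbs else (starRingEnd ℂ) z ^ n.natAbs

lemma stdPow_natCast (k : ℕ) (z : ℂ) : stdPow k z = z ^ k := by simp [stdPow]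

lemma stdPow_neg_natCast (k : ℕ) (z : ℂ) : stdPow (-k) z = (starRingEnd ℂ) z ^ k := by
  rcases Nat.eq_zero_or_pos k with rfl | hk
  · simp [stdPow]
  · simp [stdPow, hk.ne']

lemma continuous_stdPow (n : ℤ) : Continuous (stdPow n) := by
  have := Complex.continuous_conj
  unfold stdPow
  split_ifs <;> fun_prop

lemma norm_stdPow (n : ℤ) (z : ℂ) : ‖stdPow n z‖ = ‖z‖ ^ n.natAbs := by
  unfold stdPow
  split_ifs <;> simp

lemma stdPow_of_norm_eq_one (n : ℤ) {u : ℂ} (hu : ‖u‖ = 1) : stdPow n u = u ^ n := by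
  obtain ⟨k, rfl | rfl⟩ := n.eq_nat_or_neg
  · simp [stdPow_natCast]
  · simp [stdPow_neg_natCast, ← Complex.inv_eq_conj hu]

lemma stdPow_inv_conj (n : ℤ) (z : ℂ) : stdPow n ((starRingEnd ℂ) z)⁻¹ = (stdPow (-n) z)⁻¹ := by
  obtain ⟨k, rfl | rfl⟩ := n.eq_nat_or_neg <;> simp [stdPow_natCast, stdPow_neg_natCast]

lemma tendsto_stdPow_cocompact {n : ℤ} (hn : n ≠ 0) :
    Tendsto (stdPow n) (cocompact ℂ) (cocompact ℂ) :=
  tendsto_cocompact_of_norm_eq_pow (Int.natAbs_ne_zero.2 hn) tendsto_id (norm_stdPow n)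

lemma stdSphereMap_coe (n : ℤ) (z : ℂ) : stdSphereMap n z = (stdPow n z : OnePoint ℂ) := by
  change (if n = 0 then ((1 : ℂ) : OnePoint ℂ) else if 0 < n then ((z ^ n.toNat : ℂ) : OnePoint ℂ)
    else (((starRingEnd ℂ) z ^ (-n).toNat : ℂ) : OnePoint ℂ)) = _
  rcases lt_trichotomy n 0 with hn | rfl | hn
  · simp [stdPow, hn.ne, hn.not_gt, hn.not_ge, show (-n).toNat = n.natAbs by lia]
  · simp [stdPow]
  · simp [stdPow, hn.ne', hn, hn.le, show n.toNat = n.natAbs by lia]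

lemma stdSphereMap_infty {n : ℤ} (hn : n ≠ 0) : stdSphereMap n ∞ = ∞ := if_neg hn

lemma stdSphereMap_zero (x : OnePoint ℂ) : stdSphereMap 0 x = ((1 : ℂ) : OnePoint ℂ) := by
  cases x <;> rfl

lemma continuous_stdSphereMap (n : ℤ) : Continuous (stdSphereMap n) := by
  rcases eq_or_ne n 0 with rfl | hn
  · exact continuous_const.congr fun x => (stdSphereMap_zero x).symm
  · refine (OnePoint.continuous_map (continuous_stdPow n) ?_).congr fun x => ?_
    · simpa only [coclosedCompact_eq_cocompact] using tendsto_stdPow_cocompact hn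
    · cases x
      · exact (stdSphereMap_infty hn).symm
      · exact (stdSphereMap_coe n _).symm

/-- `stdSphereMap n` as a bundled continuous map. -/
noncomputable def stdContinuousMap (n : ℤ) : C(OnePoint ℂ, OnePoint ℂ) :=
  ⟨stdSphereMap n, continuous_stdSphereMap n⟩

lemma stdContinuousMap_ofCoords_one_conj (n : ℤ) (z : ℂ) :
    stdContinuousMap n (ofCoords (1, (starRingEnd ℂ) z)) = ofCoords (1, stdPow (-n) z) := by
  change stdSphereMap n _ = _
  by_cases hz : z = 0
  · rcases eq_or_ne n 0 with rfl | hn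
    · simp [stdSphereMap_zero, stdPow, ofCoords]
    · have h : stdPow (-n) 0 = 0 := norm_eq_zero.1 (by simp [norm_stdPow, hn])
      simp [hz, h, ofCoords, stdSphereMap_infty hn]
  · have h : stdPow (-n) z ≠ 0 := norm_ne_zero_iff.1 (by simp [norm_stdPow, hz])
    rw [ofCoords_of_snd_ne_zero (by simpa using hz), stdSphereMap_coe, ofCoords_of_snd_ne_zero h]
    simp [stdPow_inv_conj]

lemma hasDegree_iff_homotopic (R : C(OnePoint ℂ, OnePoint ℂ)) (n : ℤ) :
    HasDegree R n ↔ R.Homotopic (stdContinuousMap n) := by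
  constructor
  · rintro ⟨H, hH, h₀, h₁⟩
    exact ⟨⟨⟨H ∘ Prod.swap, hH.comp continuous_swap⟩, h₀, h₁⟩⟩
  · rintro ⟨H⟩
    exact ⟨H ∘ Prod.swap, H.continuous.comp continuous_swap, fun z => H.map_zero_left z,
      fun z => H.map_one_left z⟩

/-! ### The clutching number -/

lemma exists_continuous_exp_eq {X : Type*} [TopologicalSpace X] [SimplyConnectedSpace X]
    [LocallyPathConnectedSpace X] {q : X → ℂ} (hq : Continuous q) (hq₀ : ∀ x, q x ≠ 0) :
    ∃ l : X → ℂ, Continuous l ∧ ∀ x, Complex.exp (l x) = q x := by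
  obtain ⟨x₀⟩ : Nonempty X := inferInstance
  obtain ⟨l, ⟨-, hl⟩, -⟩ := Complex.isCoveringMapOn_exp.existsUnique_continuousMap_lifts
    ⟨q, hq⟩ (Complex.exp_log (hq₀ x₀)) hq₀
  exact ⟨l, l.continuous, congrFun hl⟩

lemma eq_of_exp_eq {X : Type*} [TopologicalSpace X] [PreconnectedSpace X] {l l' : X → ℂ}
    (hl : Continuous l) (hl' : Continuous l')
    (hexp : ∀ x, Complex.exp (l x) = Complex.exp (l' x)) {x₀ : X} (hx₀ : l x₀ = l' x₀) : l = l' :=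
  Complex.isCoveringMap_exp.eq_of_comp_eq hl hl' (funext fun x => Subtype.ext (hexp x)) x₀ hx₀

lemma zpow_eq_zero_of_eq_on_circle {q : ℂ → ℂ} (hq : Continuous q) (hq₀ : ∀ z, q z ≠ 0) {k : ℤ}
    (hcircle : ∀ u, ‖u‖ = 1 → q u = u ^ k) : k = 0 := by
  obtain ⟨l, hl, hlq⟩ := exists_continuous_exp_eq hq hq₀
  have hlift : (fun s : ℝ => l (Complex.exp (s * Complex.I))) =
      fun s : ℝ => l 1 + k * (s * Complex.I) := by
    refine eq_of_exp_eq (by fun_prop) (by fun_prop) (fun s => ?_) (x₀ := 0) (by simp)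
    rw [hlq, hcircle _ (Complex.norm_exp_ofReal_mul_I s), Complex.exp_add, hlq,
      hcircle 1 norm_one, one_zpow, one_mul, Complex.exp_int_mul]
  have hturn := congrFun hlift (2 * Real.pi)
  simpa [Real.pi_ne_zero] using hturn

/-- The standard Hermitian form on `ℂ²`. -/
noncomputable def herm (u v : ℂ × ℂ) : ℂ :=
  (starRingEnd ℂ) u.1 * v.1 + (starRingEnd ℂ) u.2 * v.2

lemma continuous_herm : Continuous fun p : (ℂ × ℂ) × (ℂ × ℂ) => herm p.1 p.2 := by
  have := Complex.continuous_conj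
  unfold herm
  fun_prop

lemma herm_smul_right (c : ℂ) (u v : ℂ × ℂ) : herm u (c • v) = c * herm u v := by
  simp only [herm, Prod.smul_fst, Prod.smul_snd, smul_eq_mul]
  ring

lemma herm_smul_left (c : ℂ) (u v : ℂ × ℂ) :
    herm (c • u) v = (starRingEnd ℂ) c * herm u v := by
  simp only [herm, Prod.smul_fst, Prod.smul_snd, smul_eq_mul, map_mul]
  ring

lemma herm_self_ne_zero {u : ℂ × ℂ} (hu : u ≠ 0) : herm u u ≠ 0 := by
  have h : herm u u = (‖u.1‖ ^ 2 + ‖u.2‖ ^ 2 : ℝ) := by simp [herm, Complex.conj_mul']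
  rw [h, Complex.ofReal_ne_zero]
  contrapose! hu
  have h₁ : ‖u.1‖ ^ 2 = 0 := by nlinarith [sq_nonneg ‖u.1‖, sq_nonneg ‖u.2‖]
  have h₂ : ‖u.2‖ ^ 2 = 0 := by nlinarith [sq_nonneg ‖u.1‖, sq_nonneg ‖u.2‖]
  exact Prod.ext (by simpa using h₁) (by simpa using h₂)

/-- The orthogonal projection of `v` onto the line of `ℂ²` represented by the point `x` of the
Riemann sphere. -/
noncomputable def lineProj (x : OnePoint ℂ) (v : ℂ × ℂ) : ℂ × ℂ :=
  (herm (coords x) v / herm (coords x) (coords x)) • coords x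

lemma lineProj_ofCoords {u : ℂ × ℂ} (hu : u ≠ 0) (v : ℂ × ℂ) :
    lineProj (ofCoords u) v = (herm u v / herm u u) • u := by
  obtain ⟨c, hc, h⟩ :=
    exists_eq_smul_of_ofCoords_eq (coords_ne_zero _) hu (ofCoords_coords (ofCoords u))
  have hconj : (starRingEnd ℂ) c ≠ 0 := (map_ne_zero _).2 hc
  have hself := herm_self_ne_zero hu
  rw [lineProj, h, herm_smul_left, herm_smul_left, herm_smul_right, smul_smul]
  congr 1
  field_simp

lemma lineProj_smul (x : OnePoint ℂ) (c : ℂ) (v : ℂ × ℂ) :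
    lineProj x (c • v) = c • lineProj x v := by
  simp only [lineProj, herm_smul_right, smul_smul, mul_div_assoc]

lemma continuous_lineProj : Continuous fun p : OnePoint ℂ × (ℂ × ℂ) => lineProj p.1 p.2 := by
  refine continuous_iff_continuousAt.2 fun ⟨x, v⟩ => ?_
  have hu := coords_ne_zero x
  rw [← ofCoords_coords x, ContinuousAt, nhds_prod_eq, nhds_ofCoords hu, prod_map_left,
    tendsto_map'_iff, ← nhds_prod_eq]
  have hproj : ContinuousAt (fun p : (ℂ × ℂ) × (ℂ × ℂ) => (herm p.1 p.2 / herm p.1 p.1) • p.1)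
      (coords x, v) :=
    (ContinuousAt.div continuous_herm.continuousAt
      (continuous_herm.comp (continuous_fst.prodMk continuous_fst)).continuousAt
      (herm_self_ne_zero hu)).smul continuousAt_fst
  rw [lineProj_ofCoords hu]
  refine hproj.tendsto.congr' ?_
  filter_upwards [continuousAt_fst.eventually_ne hu] with p hp
  exact (lineProj_ofCoords hp p.2).symm

lemma ofCoords_lineProj {x : OnePoint ℂ} {v : ℂ × ℂ} (h : lineProj x v ≠ 0) :
    ofCoords (lineProj x v) = x := by
  rw [lineProj, ofCoords_smul (left_ne_zero_of_smul h), ofCoords_coords]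

/-- The vector of `ℂ²` orthogonal to `u` obtained by turning `u` through a right angle. -/
noncomputable def perp (u : ℂ × ℂ) : ℂ × ℂ := (-(starRingEnd ℂ) u.2, (starRingEnd ℂ) u.1)

lemma perp_ne_zero {u : ℂ × ℂ} (hu : u ≠ 0) : perp u ≠ 0 := by
  simpa [perp, Prod.ext_iff, and_comm] using hu

lemma perp_smul (c : ℂ) (u : ℂ × ℂ) : perp (c • u) = (starRingEnd ℂ) c • perp u := by
  simp [perp]

lemma continuous_perp : Continuous perp := by
  have := Complex.continuous_conj
  unfold perp
  fun_prop

lemma herm_perp (u : ℂ × ℂ) : herm u (perp u) = 0 := by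
  simp only [herm, perp]
  ring

lemma herm_self_smul (u v : ℂ × ℂ) :
    herm u u • v = herm u v • u + (u.1 * v.2 - u.2 * v.1) • perp u := by
  ext <;> simp only [herm, perp, Prod.fst_add, Prod.snd_add, Prod.smul_fst, Prod.smul_snd,
    smul_eq_mul] <;> ring

/-- The antipodal map of the Riemann sphere: `antipode x` represents the orthogonal complement
of the line represented by `x`. -/
noncomputable def antipode (x : OnePoint ℂ) : OnePoint ℂ := ofCoords (perp (coords x))

lemma antipode_ofCoords {u : ℂ × ℂ} (hu : u ≠ 0) :
    antipode (ofCoords u) = ofCoords (perp u) := by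
  obtain ⟨c, hc, h⟩ :=
    exists_eq_smul_of_ofCoords_eq (coords_ne_zero _) hu (ofCoords_coords (ofCoords u))
  rw [antipode, h, perp_smul, ofCoords_smul ((map_ne_zero _).2 hc)]

lemma continuous_antipode : Continuous antipode := by
  refine continuous_iff_continuousAt.2 fun x => ?_
  have hu := coords_ne_zero x
  rw [← ofCoords_coords x, ContinuousAt, nhds_ofCoords hu, tendsto_map'_iff, antipode_ofCoords hu]
  refine ((continuousAt_ofCoords (perp_ne_zero hu)).tendsto.comp
    (continuous_perp.tendsto _)).congr' ?_
  filter_upwards [continuousAt_id.eventually_ne hu] with u hu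
  exact (antipode_ofCoords hu).symm

lemma ne_antipode_self (x : OnePoint ℂ) : x ≠ antipode x := by
  intro h
  have hu := coords_ne_zero x
  obtain ⟨c, hc, hperp⟩ := exists_eq_smul_of_ofCoords_eq (perp_ne_zero hu) hu
    (h.symm.trans (ofCoords_coords x).symm)
  have horth := herm_perp (coords x)
  rw [hperp, herm_smul_right] at horth
  exact mul_ne_zero hc (herm_self_ne_zero hu) horth

lemma lineProj_ne_zero {x : OnePoint ℂ} {v : ℂ × ℂ} (hv : v ≠ 0)
    (h : ofCoords v ≠ antipode x) : lineProj x v ≠ 0 := by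
  contrapose! h
  have hself := herm_self_ne_zero (coords_ne_zero x)
  have horth : herm (coords x) v = 0 := by simpa [lineProj, coords_ne_zero, hself] using h
  have hsmul := herm_self_smul (coords x) v
  rw [horth, zero_smul, zero_add] at hsmul
  have hcoef := left_ne_zero_of_smul (hsmul ▸ smul_ne_zero hself hv)
  rw [← ofCoords_smul hself, hsmul, ofCoords_smul hcoef, antipode]

/-- `φ` lifts the map `s` into the Riemann sphere to homogeneous coordinates. -/
structure IsCoordLift {X : Type*} [TopologicalSpace X] (φ : X → ℂ × ℂ) (s : X → OnePoint ℂ) :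
    Prop where
  continuous : Continuous φ
  ne_zero : ∀ x, φ x ≠ 0
  ofCoords_eq : ∀ x, ofCoords (φ x) = s x

lemma IsCoordLift.project {X : Type*} [TopologicalSpace X] {φ : X → ℂ × ℂ}
    {s s' : X → OnePoint ℂ} (h : IsCoordLift φ s) (hs' : Continuous s')
    (hne : ∀ x, s x ≠ antipode (s' x)) : IsCoordLift (fun x => lineProj (s' x) (φ x)) s' := by
  have hne₀ : ∀ x, lineProj (s' x) (φ x) ≠ 0 := fun x =>
    lineProj_ne_zero (h.ne_zero x) (by rw [h.ofCoords_eq]; exact hne x)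
  have hcont : Continuous fun x => lineProj (s' x) (φ x) := by
    have hφ := h.continuous
    have hproj := continuous_lineProj
    fun_prop
  exact ⟨hcont, hne₀, fun x => ofCoords_lineProj (hne₀ x)⟩

lemma IsCoordLift.exists_eq_smul {X : Type*} [TopologicalSpace X] {φ ψ : X → ℂ × ℂ}
    {s : X → OnePoint ℂ} (hφ : IsCoordLift φ s) (hψ : IsCoordLift ψ s) :
    ∃ κ : X → ℂ, Continuous κ ∧ (∀ x, κ x ≠ 0) ∧ ∀ x, φ x = κ x • ψ x := by
  have hself : ∀ x, herm (ψ x) (ψ x) ≠ 0 := fun x => herm_self_ne_zero (hψ.ne_zero x)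
  have hκ : ∀ x, φ x = (herm (ψ x) (φ x) / herm (ψ x) (ψ x)) • ψ x := fun x => by
    obtain ⟨c, -, hc⟩ := exists_eq_smul_of_ofCoords_eq (hφ.ne_zero x) (hψ.ne_zero x)
      ((hφ.ofCoords_eq x).trans (hψ.ofCoords_eq x).symm)
    rw [hc, herm_smul_right, mul_div_cancel_right₀ _ (hself x)]
  exact ⟨_, (continuous_herm.comp (hψ.continuous.prodMk hφ.continuous)).div
    (continuous_herm.comp (hψ.continuous.prodMk hψ.continuous)) hself,
    fun x => left_ne_zero_of_smul (hκ x ▸ hφ.ne_zero x), hκ⟩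

/-- `S` has clutching number `n`: the line bundle that `S` pulls back from the tautological line
bundle of the Riemann sphere has nowhere zero sections over the charts `z ↦ z` and
`z ↦ 1 / conj z`, both of which are the identity on the unit circle, with transition function
`u ↦ u ^ n` there. -/
def HasClutchingNumber (S : C(OnePoint ℂ, OnePoint ℂ)) (n : ℤ) : Prop :=
  ∃ φ₀ φ₁ : ℂ → ℂ × ℂ, IsCoordLift φ₀ (fun z : ℂ => S z) ∧
    IsCoordLift φ₁ (fun z : ℂ => S (ofCoords (1, (starRingEnd ℂ) z))) ∧
    ∀ u : ℂ, ‖u‖ = 1 → φ₀ u = u ^ n • φ₁ u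

lemma continuous_ofCoords_one_conj :
    Continuous fun z : ℂ => ofCoords (1, (starRingEnd ℂ) z) :=
  continuous_iff_continuousAt.2 fun z =>
    ContinuousAt.comp (g := ofCoords) (continuousAt_ofCoords (by simp))
      (continuous_const.prodMk Complex.continuous_conj).continuousAt

lemma ofCoords_one_conj_of_norm_eq_one {u : ℂ} (hu : ‖u‖ = 1) :
    ofCoords (1, (starRingEnd ℂ) u) = u := by
  have hu₀ : u ≠ 0 := norm_ne_zero_iff.1 (by simp [hu])
  simp [ofCoords, hu₀, ← Complex.inv_eq_conj hu]

lemma HasClutchingNumber.of_forall_ne_antipode {S S' : C(OnePoint ℂ, OnePoint ℂ)} {n : ℤ}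
    (h : HasClutchingNumber S n) (hne : ∀ x, S x ≠ antipode (S' x)) :
    HasClutchingNumber S' n := by
  obtain ⟨φ₀, φ₁, h₀, h₁, hglue⟩ := h
  refine ⟨_, _, h₀.project (S'.continuous.comp OnePoint.continuous_coe) fun z => hne z,
    h₁.project (S'.continuous.comp continuous_ofCoords_one_conj) fun z => hne _, fun u hu => ?_⟩
  simp only [hglue u hu, lineProj_smul, ofCoords_one_conj_of_norm_eq_one hu]

lemma HasClutchingNumber.of_homotopic {S S' : C(OnePoint ℂ, OnePoint ℂ)} {n : ℤ}
    (hS : HasClutchingNumber S n) (hSS' : S.Homotopic S') : HasClutchingNumber S' n := by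
  obtain ⟨H⟩ := hSS'
  have hclose : ∀ s : I, ∀ᶠ t in 𝓝 s, ∀ x ∈ (Set.univ : Set (OnePoint ℂ)),
      H (s, x) ≠ antipode (H (t, x)) ∧ H (t, x) ≠ antipode (H (s, x)) := by
    intro s
    refine isCompact_univ.eventually_forall_of_forall_eventually fun x _ => ?_
    have hs : Continuous fun p : I × OnePoint ℂ => H (s, p.2) := by fun_prop
    have ht : Continuous fun p : I × OnePoint ℂ => H (p.1, p.2) := H.continuous
    exact ((hs.continuousAt.ne_iff_eventually_ne (continuous_antipode.comp ht).continuousAt).1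
        (ne_antipode_self (H (s, x)))).and
      ((ht.continuousAt.ne_iff_eventually_ne (continuous_antipode.comp hs).continuousAt).1
        (ne_antipode_self (H (s, x))))
  have hconst : IsLocallyConstant fun t : I => HasClutchingNumber (H.curry t) n := by
    refine IsLocallyConstant.iff_eventually_eq _ |>.2 fun s => ?_
    filter_upwards [hclose s] with t ht
    exact propext ⟨fun h => h.of_forall_ne_antipode fun x => (ht x trivial).2,
      fun h => h.of_forall_ne_antipode fun x => (ht x trivial).1⟩
  have h01 := hconst.apply_eq_of_preconnectedSpace 0 1
  simpa only [H.curry_zero, H.curry_one, eq_iff_iff, hS, true_iff] using h01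

lemma HasClutchingNumber.unique {S : C(OnePoint ℂ, OnePoint ℂ)} {n m : ℤ}
    (hn : HasClutchingNumber S n) (hm : HasClutchingNumber S m) : n = m := by
  obtain ⟨φ₀, φ₁, hφ₀, hφ₁, hφ⟩ := hn
  obtain ⟨ψ₀, ψ₁, hψ₀, hψ₁, hψ⟩ := hm
  obtain ⟨κ₀, hκ₀, hκ₀_ne, hφψ₀⟩ := hφ₀.exists_eq_smul hψ₀
  obtain ⟨κ₁, hκ₁, hκ₁_ne, hφψ₁⟩ := hφ₁.exists_eq_smul hψ₁
  refine sub_eq_zero.1 (zpow_eq_zero_of_eq_on_circle (hκ₀.div hκ₁ hκ₁_ne)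
    (fun z => div_ne_zero (hκ₀_ne z) (hκ₁_ne z)) fun u hu => ?_)
  have hu₀ : u ≠ 0 := norm_ne_zero_iff.1 (by simp [hu])
  have hsmul : (κ₀ u * u ^ m) • ψ₁ u = (u ^ n * κ₁ u) • ψ₁ u := by
    rw [mul_smul, mul_smul, ← hψ u hu, ← hφψ₀, ← hφψ₁, hφ u hu]
  rw [Pi.div_apply, zpow_sub₀ hu₀, div_eq_div_iff (hκ₁_ne u) (zpow_ne_zero _ hu₀)]
  exact smul_left_injective ℂ (hψ₁.ne_zero u) hsmul

lemma hasClutchingNumber_stdContinuousMap (n : ℤ) :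
    HasClutchingNumber (stdContinuousMap n) n := by
  refine ⟨fun z => (stdPow n z, 1), fun z => (1, stdPow (-n) z),
    ⟨(continuous_stdPow n).prodMk continuous_const, by simp, fun z => ?_⟩,
    ⟨continuous_const.prodMk (continuous_stdPow (-n)), by simp, fun z => ?_⟩, fun u hu => ?_⟩
  · exact (ofCoords_mk_one _).trans (stdSphereMap_coe n z).symm
  · exact (stdContinuousMap_ofCoords_one_conj n z).symm
  · have hu₀ : u ≠ 0 := norm_ne_zero_iff.1 (by simp [hu])
    simp [stdPow_of_norm_eq_one _ hu, mul_inv_cancel₀ (zpow_ne_zero n hu₀)]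

lemma eq_of_homotopic_stdContinuousMap {n m : ℤ}
    (h : (stdContinuousMap n).Homotopic (stdContinuousMap m)) : n = m :=
  ((hasClutchingNumber_stdContinuousMap n).of_homotopic h).unique
    (hasClutchingNumber_stdContinuousMap m)

/-! ### Winding numbers and radial maps -/

lemma exists_isWindingNumber {γ : ℝ → ℂ} (hγ : Continuous γ) (hγ₀ : ∀ t, γ t ≠ 0)
    (hloop : γ 0 = γ (2 * Real.pi)) : ∃ n, IsWindingNumber γ n := by
  obtain ⟨l, hl, hlγ⟩ := exists_continuous_exp_eq hγ hγ₀
  obtain ⟨n, hn⟩ := Complex.exp_eq_exp_iff_exists_int.1 ((hlγ _).trans (hloop ▸ (hlγ 0).symm))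
  refine ⟨n, fun t => (l t).im, by fun_prop, fun t _ => ?_, ?_⟩
  · rw [← hlγ, Complex.norm_exp, Complex.ofReal_exp, ← Complex.exp_add, Complex.re_add_im]
  · simp only [hn, Complex.add_im, add_sub_cancel_left]
    simp [mul_comm]

lemma IsWindingNumber.exists_continuous_angle {P : ℂ → ℂ} {n : ℤ}
    (h : IsWindingNumber (fun α : ℝ => P (Complex.exp (α * Complex.I))) n) :
    ∃ Λ : Real.Angle → ℝ, Continuous Λ ∧ ∀ a : Real.Angle,
      P a.toCircle = ‖P a.toCircle‖ * (Circle.exp (Λ a) * a.toCircle ^ n : Circle) := by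
  obtain ⟨θ, hθ, hθP, hturn⟩ := h
  have _ : Fact ((0 : ℝ) < 2 * Real.pi) := ⟨Real.two_pi_pos⟩
  have hclosed : θ 0 - n * 0 = θ (2 * Real.pi) - n * (2 * Real.pi) := by linarith
  refine ⟨AddCircle.liftIco (2 * Real.pi) 0 fun t => θ t - n * t,
    AddCircle.liftIco_zero_continuous hclosed (by fun_prop), fun a => ?_⟩
  obtain ⟨t, ht, rfl⟩ : ∃ t ∈ Set.Ico 0 (2 * Real.pi), (t : Real.Angle) = a :=
    ⟨_, by simpa using (AddCircle.equivIco (2 * Real.pi) 0 a).2,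
      (AddCircle.equivIco (2 * Real.pi) 0).symm_apply_apply a⟩
  have hlift : AddCircle.liftIco (2 * Real.pi) 0 (fun t => θ t - n * t) (t : Real.Angle) =
      θ t - n * t := AddCircle.liftIco_zero_coe_apply ht
  have hexp : Circle.exp (θ t - n * t) * Circle.exp t ^ n = Circle.exp (θ t) := by
    rw [← Circle.exp_intCast_mul, ← Circle.exp_add, sub_add_cancel]
  rw [hlift, Real.Angle.toCircle_coe, hexp, Circle.coe_exp, Circle.coe_exp]
  exact hθP t (Set.Ico_subset_Icc_self ht)

/-- The self-map of the plane that preserves the norm and sends the direction `a` to `β a`. -/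
noncomputable def radialMap (β : Real.Angle → Circle) (z : ℂ) : ℂ := ‖z‖ * β z.arg

lemma norm_radialMap (β : Real.Angle → Circle) (z : ℂ) : ‖radialMap β z‖ = ‖z‖ := by
  simp [radialMap, Circle.norm_coe]

lemma continuous_radialMap_prod {X : Type*} [TopologicalSpace X] {β : X × Real.Angle → Circle}
    (hβ : Continuous β) :
    Continuous fun p : X × ℂ => radialMap (fun a => β (p.1, a)) p.2 := by
  refine continuous_iff_continuousAt.2 fun ⟨x, z⟩ => ?_
  rcases eq_or_ne z 0 with rfl | hz
  · have hsnd : Tendsto (fun p : X × ℂ => ‖p.2‖) (𝓝 (x, 0)) (𝓝 0) := by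
      simpa using (continuous_snd (X := X) (Y := ℂ)).norm.tendsto (x, 0)
    have hlim : Tendsto (fun p : X × ℂ => radialMap (fun a => β (p.1, a)) p.2)
        (𝓝 (x, 0)) (𝓝 0) := by
      refine squeeze_zero_norm (fun p => ?_) hsnd
      exact (norm_radialMap _ p.2).le
    simpa [ContinuousAt, radialMap] using hlim
  · have harg : ContinuousAt (fun p : X × ℂ => (p.2.arg : Real.Angle)) (x, z) :=
      ContinuousAt.comp (g := Real.Angle.coe ∘ Complex.arg)
        (Complex.continuousAt_arg_coe_angle hz) continuousAt_snd
    have hdir : ContinuousAt (fun p : X × ℂ => β (p.1, (p.2.arg : Real.Angle))) (x, z) :=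
      hβ.continuousAt.comp (continuousAt_fst.prodMk harg)
    have hnorm : ContinuousAt (fun p : X × ℂ => (‖p.2‖ : ℂ)) (x, z) := by fun_prop
    exact hnorm.mul (continuous_subtype_val.continuousAt.comp hdir)

/-- `P` is positively homogeneous of degree `d`. -/
def IsPosHomogeneous {E F : Type*} [AddCommGroup E] [Module ℝ E] [AddCommGroup F] [Module ℝ F]
    (d : ℕ) (P : E → F) : Prop :=
  ∀ (r : ℝ) (z : E), 0 < r → P (r • z) = r ^ d • P z

lemma sameRay_radialMap {P : ℂ → ℂ} {d : ℕ} (hP : IsPosHomogeneous d P)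
    {β : Real.Angle → Circle}
    (hβ : ∀ a : Real.Angle, P a.toCircle = ‖P a.toCircle‖ * β a) (z : ℂ) :
    SameRay ℝ (P z) (radialMap β z) := by
  rcases eq_or_ne z 0 with rfl | hz
  · simp [radialMap]
  have hpolar : ‖z‖ • ((z.arg : Real.Angle).toCircle : ℂ) = z := by
    simp [Circle.coe_exp, Complex.norm_mul_exp_arg_mul_I]
  rw [← hpolar, hP _ _ (norm_pos_iff.2 hz), hβ, hpolar, radialMap, ← Complex.real_smul,
    ← Complex.real_smul]
  exact (((SameRay.refl _).nonneg_smul_left (norm_nonneg _)).nonneg_smul_left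
    (by positivity)).nonneg_smul_right (norm_nonneg z)

lemma stdPow_toCircle (n : ℤ) (a : Real.Angle) :
    stdPow n a.toCircle = (a.toCircle ^ n : Circle) := by
  rw [stdPow_of_norm_eq_one n (Circle.norm_coe _), Circle.coe_zpow]

lemma isPosHomogeneous_stdPow (n : ℤ) : IsPosHomogeneous n.natAbs (stdPow n) := by
  intro r z _
  obtain ⟨k, rfl | rfl⟩ := n.eq_nat_or_neg <;>
    simp [stdPow_natCast, stdPow_neg_natCast, mul_pow]

/-- The extension by `∞ ↦ ∞` of a proper self-map of the plane. -/
noncomputable def extendProper (w : ℂ → ℂ) (hw : Continuous w)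
    (hlim : Tendsto w (cocompact ℂ) (cocompact ℂ)) : C(OnePoint ℂ, OnePoint ℂ) :=
  ⟨OnePoint.map w, OnePoint.continuous_map hw (by rwa [coclosedCompact_eq_cocompact])⟩

lemma continuous_angle_toCircle : Continuous Real.Angle.toCircle :=
  Circle.exp.continuous.quotient_lift _

lemma continuous_radialMap (β : C(Real.Angle, Circle)) : Continuous (radialMap β) :=
  (continuous_radialMap_prod (X := Unit) (β.continuous.comp continuous_snd)).comp (.prodMk_right ())

lemma tendsto_radialMap_cocompact (β : Real.Angle → Circle) :
    Tendsto (radialMap β) (cocompact ℂ) (cocompact ℂ) :=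
  tendsto_cocompact_of_norm_eq_pow one_ne_zero tendsto_id fun z => by
    rw [norm_radialMap, pow_one, id]

/-- The extension of `radialMap β` to the Riemann sphere. -/
noncomputable def radialContinuousMap (β : C(Real.Angle, Circle)) :
    C(OnePoint ℂ, OnePoint ℂ) :=
  extendProper (radialMap β) (continuous_radialMap β) (tendsto_radialMap_cocompact β)

lemma homotopic_radialContinuousMap {β β' : C(Real.Angle, Circle)} (h : β.Homotopic β') :
    (radialContinuousMap β).Homotopic (radialContinuousMap β') := by
  obtain ⟨H⟩ := h
  refine homotopic_of_tendsto_cocompact (w := fun p => radialMap (fun a => H (p.1, a)) p.2)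
    (continuous_radialMap_prod H.continuous) (fun t => ?_) (fun z => ?_) (fun z => ?_)
  · exact tendsto_cocompact_of_norm_eq_pow one_ne_zero tendsto_snd fun p => by
      rw [norm_radialMap, pow_one]
  · simp only [H.apply_zero]
    rfl
  · simp only [H.apply_one]
    rfl

/-- The map `a ↦ a ^ n` from directions to the unit circle. -/
noncomputable def angleZPow (n : ℤ) : C(Real.Angle, Circle) :=
  ⟨fun a => a.toCircle ^ n, continuous_angle_toCircle.zpow n⟩

lemma homotopic_angleZPow {β : C(Real.Angle, Circle)} {Λ : Real.Angle → ℝ} (hΛ : Continuous Λ)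
    {n : ℤ} (hβ : ∀ a, β a = Circle.exp (Λ a) * a.toCircle ^ n) : β.Homotopic (angleZPow n) := by
  have hpow := (angleZPow n).continuous
  refine ⟨⟨⟨fun p => Circle.exp ((1 - p.1 : ℝ) * Λ p.2) * angleZPow n p.2, by fun_prop⟩,
    fun a => ?_, fun a => ?_⟩⟩
  · simp [hβ, angleZPow]
  · simp

lemma homotopic_radialContinuousMap_stdContinuousMap_zero :
    (radialContinuousMap (angleZPow 0)).Homotopic (stdContinuousMap 0) := by
  have hnorm : ∀ z : ℂ, radialContinuousMap (angleZPow 0) z = ((‖z‖ : ℂ) : OnePoint ℂ) := fun z =>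
    congrArg OnePoint.some (by simp [radialMap, angleZPow])
  have hpos : ∀ x : ℝ, 0 ≤ x → (1 + x : ℂ) ≠ 0 := fun x hx => by
    exact_mod_cast (by positivity : 1 + x ≠ 0)
  have hproper : Tendsto (fun z : ℂ => (‖z‖ : ℂ)) (cocompact ℂ) (cocompact ℂ) :=
    tendsto_cocompact_of_norm_eq_pow one_ne_zero tendsto_id fun z => by simp
  have hinv := tendsto_inv_of_tendsto_cocompact hproper
  have hne := eventually_ne_of_tendsto_cocompact hproper 0
  refine homotopic_of_segment_add_ne_zero (φ := fun z => (‖z‖, 1))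
    (ψ := fun z => (1 + ‖z‖, 1 + ‖z‖)) (a := 0) (v := (1, 0)) (w := (1, 1))
    (by fun_prop) (by fun_prop) (fun t z h => ?_) (fun t h => ?_)
    hproper ?_ ?_ (fun z => ?_) (fun z => ?_)
  · refine hpos (t * ‖z‖) (mul_nonneg t.2.1 (norm_nonneg z)) ?_
    have hsnd : (1 - t + t * (1 + ‖z‖) : ℂ) = 0 := by
      simpa [mul_add] using congrArg Prod.snd h
    push_cast
    linear_combination hsnd
  · simpa using congrArg Prod.fst h
  · refine (tendsto_const_nhds.prodMk_nhds hinv).congr' ?_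
    filter_upwards [hne] with z hz
    simp [hz]
  · have hsum := hinv.add_const 1
    rw [zero_add] at hsum
    refine (hsum.prodMk_nhds hsum).congr' ?_
    filter_upwards [hne] with z hz
    simp [mul_add, hz]
  · rw [hnorm, ofCoords_mk_one]
  · have hz := hpos ‖z‖ (norm_nonneg z)
    rw [ofCoords_of_snd_ne_zero hz, div_self hz]
    exact stdSphereMap_zero z

lemma homotopic_radialContinuousMap_stdContinuousMap (n : ℤ) :
    (radialContinuousMap (angleZPow n)).Homotopic (stdContinuousMap n) := by
  rcases eq_or_ne n 0 with rfl | hn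
  · exact homotopic_radialContinuousMap_stdContinuousMap_zero
  refine (homotopic_of_sameRay (continuous_stdPow n) (continuous_radialMap _)
    (tendsto_stdPow_cocompact hn) (tendsto_radialMap_cocompact _)
    (sameRay_radialMap (isPosHomogeneous_stdPow n) fun a => ?_) (stdSphereMap_coe n)
    fun z => rfl).symm
  rw [stdPow_toCircle, Circle.norm_coe, Complex.ofReal_one, one_mul]
  rfl

lemma IsPosHomogeneous.homotopic_stdContinuousMap {P : ℂ → ℂ} {d : ℕ}
    (hP : IsPosHomogeneous d P) (hcont : Continuous P)
    (hlim : Tendsto P (cocompact ℂ) (cocompact ℂ)) {n : ℤ}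
    (hn : IsWindingNumber (fun α : ℝ => P (Complex.exp (α * Complex.I))) n) :
    (extendProper P hcont hlim).Homotopic (stdContinuousMap n) := by
  obtain ⟨Λ, hΛ, hPΛ⟩ := hn.exists_continuous_angle
  let β : C(Real.Angle, Circle) :=
    ⟨fun a => Circle.exp (Λ a) * a.toCircle ^ n,
      (Circle.exp.continuous.comp hΛ).mul (angleZPow n).continuous⟩
  have hray : (extendProper P hcont hlim).Homotopic (radialContinuousMap β) :=
    homotopic_of_sameRay hcont (continuous_radialMap β) hlim (tendsto_radialMap_cocompact β)
      (sameRay_radialMap hP hPΛ) (fun _ => rfl) fun _ => rfl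
  have hturn : (radialContinuousMap β).Homotopic (radialContinuousMap (angleZPow n)) :=
    homotopic_radialContinuousMap (homotopic_angleZPow hΛ fun _ => rfl)
  exact hray.trans (hturn.trans (homotopic_radialContinuousMap_stdContinuousMap n))

/-! ### Asymptotics at infinity -/

section Homogeneous

variable {E F : Type*} [NormedAddCommGroup E] [NormedSpace ℝ E] [NormedAddCommGroup F]
  [NormedSpace ℝ F] {P : E → F} {d : ℕ}

lemma IsPosHomogeneous.norm_apply (hP : IsPosHomogeneous d P) {z : E} (hz : z ≠ 0) :
    ‖P z‖ = ‖P (‖z‖⁻¹ • z)‖ * ‖z‖ ^ d := by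
  have h := hP ‖z‖ (‖z‖⁻¹ • z) (norm_pos_iff.2 hz)
  rw [smul_inv_smul₀ (norm_ne_zero_iff.2 hz)] at h
  rw [h, norm_smul, norm_pow, norm_norm, mul_comm]

lemma IsPosHomogeneous.isBigO_norm_pow [ProperSpace E] (hP : IsPosHomogeneous d P)
    (hcont : Continuous P) : P =O[cocompact E] fun z => ‖z‖ ^ d := by
  obtain ⟨C, hC⟩ := (isCompact_sphere (0 : E) 1).exists_bound_of_continuousOn hcont.continuousOn
  refine .of_bound C ?_
  filter_upwards [isCompact_singleton.compl_mem_cocompact] with z (hz : z ≠ 0)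
  rw [hP.norm_apply hz, norm_pow, norm_norm]
  gcongr
  exact hC _ (by simp [norm_smul, hz])

lemma IsPosHomogeneous.norm_pow_isBigO [ProperSpace E] (hP : IsPosHomogeneous d P)
    (hcont : Continuous P) (hP₀ : ∀ z, z ≠ 0 → P z ≠ 0) :
    (fun z => ‖z‖ ^ d) =O[cocompact E] P := by
  have hinv : ContinuousOn (fun z => ‖P z‖⁻¹) (Metric.sphere 0 1) :=
    hcont.norm.continuousOn.inv₀ fun z hz =>
      norm_ne_zero_iff.2 (hP₀ z (ne_zero_of_mem_unit_sphere ⟨z, hz⟩))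
  obtain ⟨C, hC⟩ := (isCompact_sphere (0 : E) 1).exists_bound_of_continuousOn hinv
  refine .of_bound C ?_
  filter_upwards [isCompact_singleton.compl_mem_cocompact] with z (hz : z ≠ 0)
  have hu : ‖‖P (‖z‖⁻¹ • z)‖⁻¹‖ ≤ C := hC _ (by simp [norm_smul, hz])
  have hpos : 0 < ‖P (‖z‖⁻¹ • z)‖ := norm_pos_iff.2 (hP₀ _ (by simp [hz]))
  rw [norm_inv, norm_norm, inv_le_iff_one_le_mul₀ hpos] at hu
  rw [hP.norm_apply hz, norm_pow, norm_norm, ← mul_assoc]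
  exact le_mul_of_one_le_left (by positivity) hu

lemma IsPosHomogeneous.ne_zero_of_tendsto (hP : IsPosHomogeneous d P)
    (hlim : Tendsto (fun z => ‖P z‖) (cocompact E) atTop) {z : E} (hz : z ≠ 0) : P z ≠ 0 := by
  intro hPz
  have hray : Tendsto (fun r : ℝ => r • z) atTop (cocompact E) := by
    refine Tendsto.mono_right ?_ Metric.cobounded_le_cocompact
    rw [← tendsto_norm_atTop_iff_cobounded]
    simpa only [norm_smul] using
      tendsto_norm_atTop_atTop.atTop_mul_const (norm_pos_iff.2 hz)
  refine not_tendsto_const_atTop (0 : ℝ) atTop ((hlim.comp hray).congr' ?_)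
  filter_upwards [eventually_gt_atTop 0] with r hr
  simp [hP r z hr, hPz]

end Homogeneous

lemma contDiff_evalZZbar (f : MvPolynomial (Fin 2) ℂ) {n : WithTop ℕ∞} :
    ContDiff ℝ n (evalZZbar f) := by
  unfold evalZZbar
  induction f using MvPolynomial.induction_on with
  | C a => simpa only [MvPolynomial.eval_C] using contDiff_const
  | add p q hp hq => simpa only [map_add] using hp.add hq
  | mul_X p i hp =>
    simp only [map_mul, MvPolynomial.eval_X]
    refine hp.mul ?_
    fin_cases i
    · exact contDiff_fun_id
    · exact Complex.conjCLE.contDiff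

lemma isPosHomogeneous_evalZZbar {f : MvPolynomial (Fin 2) ℂ} {d : ℕ} (hf : f.IsHomogeneous d) :
    IsPosHomogeneous d (evalZZbar f) := by
  intro r z _
  simp only [evalZZbar, MvPolynomial.eval_eq', Finset.smul_sum]
  refine Finset.sum_congr rfl fun m hm => ?_
  have hdeg : m.degree = d := of_not_not fun h =>
    MvPolynomial.mem_support_iff.1 hm (hf.coeff_eq_zero h)
  rw [Finsupp.degree_eq_sum, Fin.sum_univ_two] at hdeg
  simp [← hdeg, mul_pow, pow_add]
  ring

lemma isBigO_evalZZbar_homogeneousComponent (f : MvPolynomial (Fin 2) ℂ) (i : ℕ) :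
    evalZZbar (MvPolynomial.homogeneousComponent i f) =O[cocompact ℂ] fun z => ‖z‖ ^ i :=
  (isPosHomogeneous_evalZZbar (MvPolynomial.homogeneousComponent_isHomogeneous i f)).isBigO_norm_pow
    (contDiff_evalZZbar _ (n := 0)).continuous

lemma evalZZbar_eq_sum_homogeneousComponent (f : MvPolynomial (Fin 2) ℂ) :
    evalZZbar f = ∑ i ∈ Finset.range (f.totalDegree + 1),
      evalZZbar (MvPolynomial.homogeneousComponent i f) := by
  funext z
  conv_lhs => rw [← MvPolynomial.sum_homogeneousComponent f]
  simp only [evalZZbar, map_sum, Finset.sum_apply]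

lemma isBigO_evalZZbar (f : MvPolynomial (Fin 2) ℂ) {d : ℕ} (hd : f.totalDegree ≤ d) :
    evalZZbar f =O[cocompact ℂ] fun z => ‖z‖ ^ d := by
  rw [evalZZbar_eq_sum_homogeneousComponent]
  refine .sum fun i hi => (isBigO_evalZZbar_homogeneousComponent f i).trans ?_
  refine .of_bound' ?_
  filter_upwards [(tendsto_norm_cocompact_atTop (E := ℂ)).eventually_ge_atTop 1] with z hz
  have hid : i ≤ d := (Finset.mem_range_succ_iff.1 hi).trans hd
  simpa using pow_le_pow_right₀ hz hid

lemma isLittleO_evalZZbar_sub_homogeneousComponent (f : MvPolynomial (Fin 2) ℂ) :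
    (evalZZbar f - evalZZbar (MvPolynomial.homogeneousComponent f.totalDegree f)) =o[cocompact ℂ]
      fun z => ‖z‖ ^ f.totalDegree := by
  rw [evalZZbar_eq_sum_homogeneousComponent f, Finset.sum_range_succ, add_sub_cancel_right]
  exact .sum fun i hi => (isBigO_evalZZbar_homogeneousComponent f i).trans_isLittleO
    ((Asymptotics.isLittleO_pow_pow_atTop_of_lt (Finset.mem_range.1 hi)).comp_tendsto
      tendsto_norm_cocompact_atTop)

lemma norm_pow_isBigO_evalZZbar {T : MvPolynomial (Fin 2) ℂ} {d : ℕ} (hT : T.IsHomogeneous d)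
    (hTinf : Tendsto (fun z => ‖evalZZbar T z‖) (cocompact ℂ) atTop) :
    (fun z => ‖z‖ ^ d) =O[cocompact ℂ] evalZZbar T :=
  (isPosHomogeneous_evalZZbar hT).norm_pow_isBigO (contDiff_evalZZbar T (n := 0)).continuous
    fun _ => (isPosHomogeneous_evalZZbar hT).ne_zero_of_tendsto hTinf

lemma isEquivalent_evalZZbar_homogeneousComponent {f : MvPolynomial (Fin 2) ℂ}
    (hTinf : Tendsto (fun z => ‖evalZZbar (MvPolynomial.homogeneousComponent f.totalDegree f) z‖)
      (cocompact ℂ) atTop) :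
    Asymptotics.IsEquivalent (cocompact ℂ) (evalZZbar f)
      (evalZZbar (MvPolynomial.homogeneousComponent f.totalDegree f)) :=
  (isLittleO_evalZZbar_sub_homogeneousComponent f).trans_isBigO
    (norm_pow_isBigO_evalZZbar (MvPolynomial.homogeneousComponent_isHomogeneous _ f) hTinf)

lemma injective_ofCoords_one_mk : Function.Injective fun c : ℂ => ofCoords (1, c) := by
  intro a b h
  obtain ⟨c, -, hc⟩ := exists_eq_smul_of_ofCoords_eq (by simp) (by simp) h
  obtain ⟨rfl, rfl⟩ : c = 1 ∧ a = c * b := by simpa [Prod.ext_iff, eq_comm] using hc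
  exact one_mul b

/-- In the coordinate `c ↦ [1 : c]` the bounded function `q` has at most one cluster point. -/
lemma exists_tendsto_of_tendsto_ofCoords {Y : Type*} {l : Filter Y} [l.NeBot] {q : Y → ℂ}
    {x : OnePoint ℂ} (hq : l.IsBoundedUnder (· ≤ ·) fun y => ‖q y‖)
    (hlim : Tendsto (fun y => ofCoords (1, q y)) l (𝓝 x)) : ∃ c, Tendsto q l (𝓝 c) := by
  obtain ⟨C, hC⟩ := hq
  have hball : ∀ᶠ y in l, q y ∈ Metric.closedBall 0 C := by
    simpa using hC
  have hcluster : ∀ c, MapClusterPt c l q → ofCoords (1, c) = x := fun c hc => by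
    have hcont : ContinuousAt (fun c : ℂ => ofCoords (1, c)) c :=
      (continuousAt_ofCoords (by simp)).comp (by fun_prop)
    exact eq_of_nhds_neBot ((hc.continuousAt_comp hcont).neBot.mono (inf_le_inf_left _ hlim))
  obtain ⟨c, -, hc⟩ := (isCompact_closedBall (0 : ℂ) C).exists_mapClusterPt
    (le_principal_iff.2 hball)
  refine ⟨c, (isCompact_closedBall (0 : ℂ) C).tendsto_nhds_of_unique_mapClusterPt hball
    fun b _ hb => injective_ofCoords_one_mk ((hcluster b hb).trans (hcluster c hc).symm)⟩

/-! ### The degree of a map with homogeneous leading term -/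

section LeadingTerm

open scoped Asymptotics

variable {f g T : ℂ → ℂ} {d : ℕ}

lemma exists_tendsto_inv_mul (R : C(OnePoint ℂ, OnePoint ℂ))
    (hR : ∀ z : ℂ, R z = ofCoords (f z, g z)) (hf₀ : ∀ᶠ z in cocompact ℂ, f z ≠ 0)
    (hgf : g =O[cocompact ℂ] f) :
    ∃ c, Tendsto (fun z => (f z)⁻¹ * g z) (cocompact ℂ) (𝓝 c) := by
  refine exists_tendsto_of_tendsto_ofCoords (x := R ∞) ?_ ?_
  · simpa only [div_eq_inv_mul] using Asymptotics.div_isBoundedUnder_of_isBigO hgf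
  · have hR_lim := (R.continuous.tendsto ∞).comp OnePoint.tendsto_coe_infty
    rw [coclosedCompact_eq_cocompact] at hR_lim
    refine hR_lim.congr' ?_
    filter_upwards [hf₀] with z hz
    rw [Function.comp_apply, hR, ← ofCoords_smul (inv_ne_zero hz)]
    simp [hz]

lemma homotopic_extendProper (hf : ContDiff ℝ 1 f) (hg : ContDiff ℝ 1 g) (hT : ContDiff ℝ 1 T)
    (hfg : ∀ z, (f z, g z) ≠ 0) (hTlim : Tendsto T (cocompact ℂ) (cocompact ℂ))
    (hfT : f ~[cocompact ℂ] T) (hgT : g =O[cocompact ℂ] T) (R : C(OnePoint ℂ, OnePoint ℂ))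
    (hR : ∀ z : ℂ, R z = ofCoords (f z, g z)) :
    R.Homotopic (extendProper T hT.continuous hTlim) := by
  have hf_lim : Tendsto f (cocompact ℂ) (cocompact ℂ) :=
    tendsto_cocompact_iff_tendsto_norm_atTop.2 (hfT.isTheta.tendsto_norm_atTop_iff.2
      (tendsto_cocompact_iff_tendsto_norm_atTop.1 hTlim))
  have hf₀ := eventually_ne_of_tendsto_cocompact hf_lim 0
  have hTf : Tendsto (fun z => (f z)⁻¹ * T z) (cocompact ℂ) (𝓝 1) :=
    ((Asymptotics.isEquivalent_iff_tendsto_one hf₀).1 hfT.symm).congr fun z => div_eq_inv_mul _ _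
  obtain ⟨c, hc⟩ := exists_tendsto_inv_mul R hR hf₀ (hgT.trans hfT.isBigO_symm)
  obtain ⟨a, ha⟩ := exists_forall_segment_add_ne_zero (E := ℂ) (F := ℂ × ℂ) (by simp)
    (hf.prodMk hg) (hT.prodMk (contDiff_const (c := (1 : ℂ)))) hfg (fun z => by simp [Prod.ext_iff])
  refine homotopic_of_segment_add_ne_zero (ψ := fun z => (T z, 1)) (v := (1, c)) (w := (1, 0))
    (hf.prodMk hg).continuous (hT.prodMk contDiff_const).continuous ha (fun t h => ?_)
    hf_lim ?_ ?_ hR fun z => (ofCoords_mk_one _).symm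
  · simpa using congrArg Prod.fst h
  · refine (tendsto_const_nhds.prodMk_nhds hc).congr' ?_
    filter_upwards [hf₀] with z hz
    simp [hz]
  · simpa using hTf.prodMk_nhds (tendsto_inv_of_tendsto_cocompact hf_lim)

theorem degree_eq_winding_number_of_top_component_general (hf : ContDiff ℝ 1 f)
    (hg : ContDiff ℝ 1 g) (hT : ContDiff ℝ 1 T) (hfg : ∀ z, ¬(f z = 0 ∧ g z = 0))
    (hTd : IsPosHomogeneous d T) (hTinf : Tendsto (fun z => ‖T z‖) (cocompact ℂ) atTop)
    (hfT : f ~[cocompact ℂ] T) (hgT : g =O[cocompact ℂ] T) (R : OnePoint ℂ → OnePoint ℂ)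
    (hRcont : Continuous R) (hR₁ : ∀ z : ℂ, g z ≠ 0 → R z = ((f z / g z : ℂ) : OnePoint ℂ))
    (hR₂ : ∀ z : ℂ, g z = 0 → R z = ∞) :
    ∀ n : ℤ, HasDegree R n ↔
      IsWindingNumber (fun α : ℝ => T (Complex.exp ((α : ℂ) * Complex.I))) n := by
  have hTlim : Tendsto T (cocompact ℂ) (cocompact ℂ) :=
    tendsto_cocompact_iff_tendsto_norm_atTop.2 hTinf
  have hR : ∀ z : ℂ, R z = ofCoords (f z, g z) := fun z => by
    by_cases hz : g z = 0
    · rw [hR₂ z hz, ofCoords_of_snd_eq_zero hz]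
    · rw [hR₁ z hz, ofCoords_of_snd_ne_zero hz]
  have hRT := homotopic_extendProper hf hg hT (fun z h => hfg z (Prod.ext_iff.1 h)) hTlim hfT hgT
    ⟨R, hRcont⟩ hR
  have degree_of_winding {n : ℤ} (hn : IsWindingNumber
      (fun α : ℝ => T (Complex.exp ((α : ℂ) * Complex.I))) n) : HasDegree R n :=
    (hasDegree_iff_homotopic ⟨R, hRcont⟩ n).2
      (hRT.trans (hTd.homotopic_stdContinuousMap hT.continuous hTlim hn))
  refine fun n => ⟨fun hn => ?_, degree_of_winding⟩
  obtain ⟨m, hm⟩ := exists_isWindingNumber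
    (γ := fun α : ℝ => T (Complex.exp ((α : ℂ) * Complex.I)))
    (hT.continuous.comp (by fun_prop))
    (fun α => hTd.ne_zero_of_tendsto hTinf (Complex.exp_ne_zero _))
    (by simp [Complex.exp_two_pi_mul_I])
  have hstd : (stdContinuousMap n).Homotopic (stdContinuousMap m) :=
    ((hasDegree_iff_homotopic ⟨R, hRcont⟩ n).1 hn).symm.trans
      ((hasDegree_iff_homotopic ⟨R, hRcont⟩ m).1 (degree_of_winding hm))
  rwa [eq_of_homotopic_stdContinuousMap hstd]

end LeadingTerm

/-- **Theorem 2 (winding-number form).**  Let `R = f(z,z̄)/g(z,z̄)` with `f, g`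
polynomials in `z` and `z̄` without common zeros, `deg f ≥ deg g`, `d = deg f`, and
let `T` be the top homogeneous component of `f` (of degree `d`); assume
`|T(z,z̄)| → ∞` as `|z| → ∞`.  Let `R : ℂ̄ → ℂ̄` be the continuous map equal to `f/g`
where `g ≠ 0`, to `∞` where `g = 0`, and to `lim_{|z|→∞} f/g` at `∞` (this limit is
the value forced by continuity).  Then the degree of the map `R` equals the winding
number about `0` of the loop `α ↦ T(e^{iα}, e^{-iα})`, `α ∈ [0, 2π]`. -/
theorem degree_eq_winding_number_of_top_component
    (f g : MvPolynomial (Fin 2) ℂ)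
    (hfg : ∀ z : ℂ, ¬(evalZZbar f z = 0 ∧ evalZZbar g z = 0))
    (hdeg : g.totalDegree ≤ f.totalDegree)
    (d : ℕ) (hd : d = f.totalDegree)
    (T : MvPolynomial (Fin 2) ℂ) (hT : T = MvPolynomial.homogeneousComponent d f)
    (hTinf : Tendsto (fun z : ℂ => ‖evalZZbar T z‖) (cocompact ℂ) atTop)
    (R : OnePoint ℂ → OnePoint ℂ) (hRcont : Continuous R)
    (hR₁ : ∀ z : ℂ, evalZZbar g z ≠ 0 →
      R z = ((evalZZbar f z / evalZZbar g z : ℂ) : OnePoint ℂ))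
    (hR₂ : ∀ z : ℂ, evalZZbar g z = 0 → R z = ∞) :
    ∀ n : ℤ, HasDegree R n ↔
      IsWindingNumber
        (fun α : ℝ => evalZZbar T (Complex.exp ((α : ℂ) * Complex.I))) n := by
  subst hd hT
  have hT := MvPolynomial.homogeneousComponent_isHomogeneous f.totalDegree f
  exact degree_eq_winding_number_of_top_component_general (contDiff_evalZZbar f)
    (contDiff_evalZZbar g) (contDiff_evalZZbar _) hfg (isPosHomogeneous_evalZZbar hT) hTinf
    (isEquivalent_evalZZbar_homogeneousComponent hTinf)
    ((isBigO_evalZZbar g hdeg).trans (norm_pow_isBigO_evalZZbar hT hTinf)) R hRcont hR₁ hR₂
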